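/- Let v1, v2 ∈ (-1, 1). Then the squared Lorentz factor of the relativistic difference satisfies Γ(v2 ⊖ v1)² ≥ 1/2 + (1/4)·(Γ(v2)²/Γ(v1)² + Γ(v1)²/Γ(v2)²), with equality if and only if v1 = v2. -/

import Mathlib

/-- Lorentz factor of a speed `v` (in units of the speed of light): `Γ(v) = 1/√(1 - v²)`. -/
noncomputable def lorentz (v : ℝ) : ℝ := 1 / Real.sqrt (1 - v ^ 2)

/-- Relativistic subtraction of velocities. -/
noncomputable def rsub (v2 v1 : ℝ) : ℝ := (v2 - v1) / (1 - v2 * v1)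

lemma lorentz_sq_aux (v : ℝ) (h : 0 ≤ 1 - v ^ 2) : (lorentz v) ^ 2 = 1 / (1 - v ^ 2) := by
  unfold lorentz
  rw [div_pow, Real.sq_sqrt h, one_pow]

/-- For `v1, v2 ∈ (-1,1)`, the squared Lorentz factor of the relativistic difference
satisfies `Γ(v2 ⊖ v1)² ≥ 1/2 + (1/4)·(Γ(v2)²/Γ(v1)² + Γ(v1)²/Γ(v2)²)`,
with equality if and only if `v1 = v2`. -/
theorem lorentz_sq_rsub_bound (v1 v2 : ℝ)
    (h1 : v1 ∈ Set.Ioo (-1 : ℝ) 1) (h2 : v2 ∈ Set.Ioo (-1 : ℝ) 1) :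
    (lorentz (rsub v2 v1)) ^ 2
      ≥ 1 / 2 + (1 / 4) * ((lorentz v2) ^ 2 / (lorentz v1) ^ 2
        + (lorentz v1) ^ 2 / (lorentz v2) ^ 2) ∧
    ((lorentz (rsub v2 v1)) ^ 2
      = 1 / 2 + (1 / 4) * ((lorentz v2) ^ 2 / (lorentz v1) ^ 2
        + (lorentz v1) ^ 2 / (lorentz v2) ^ 2) ↔ v1 = v2) := by
  obtain ⟨h1a, h1b⟩ := h1
  obtain ⟨h2a, h2b⟩ := h2
  have ha : 0 < 1 - v1 ^ 2 := by nlinarith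
  have hb : 0 < 1 - v2 ^ 2 := by nlinarith
  have hc : 0 < 1 - v2 * v1 := by nlinarith [sq_nonneg (v1 - v2)]
  have hr : 1 - (rsub v2 v1) ^ 2 = (1 - v1 ^ 2) * (1 - v2 ^ 2) / (1 - v2 * v1) ^ 2 := by
    unfold rsub
    field_simp
    ring
  have hrp : 0 ≤ 1 - (rsub v2 v1) ^ 2 := by rw [hr]; positivity
  have key : (lorentz (rsub v2 v1)) ^ 2
      - (1 / 2 + (1 / 4) * ((lorentz v2) ^ 2 / (lorentz v1) ^ 2
        + (lorentz v1) ^ 2 / (lorentz v2) ^ 2))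
      = (v1 - v2) ^ 2 * (((1 - v2 * v1) + ((1 - v1 ^ 2) + (1 - v2 ^ 2)) / 2)
        / (2 * ((1 - v1 ^ 2) * (1 - v2 ^ 2)))) := by
    rw [lorentz_sq_aux _ hrp, lorentz_sq_aux _ ha.le, lorentz_sq_aux _ hb.le, hr]
    have ha' := ha.ne'
    have hb' := hb.ne'
    have hc' := hc.ne'
    field_simp
    ring
  have hpos : 0 < ((1 - v2 * v1) + ((1 - v1 ^ 2) + (1 - v2 ^ 2)) / 2)
        / (2 * ((1 - v1 ^ 2) * (1 - v2 ^ 2))) := by positivity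
  constructor
  · have := mul_nonneg (sq_nonneg (v1 - v2)) hpos.le
    linarith
  · rw [← sub_eq_zero, key, mul_eq_zero, or_iff_left hpos.ne', sq_eq_zero_iff, sub_eq_zero]
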